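/- Assume the primal problem is feasible. Let ε > 0 and choose step sizes α, β > 0 with α < 2/L and β < min{ ε/(2 N^{3/2} L), √( α(1 − Lα/2) ε² / (2 N L) ) }. Then there exists T ∈ ℕ with T ≤ ⌈ (D* − D(z(0))) / δ(α,β) ⌉, where δ(α,β) = min{ (α − (L/2)α²)·ε²/2 − N L β², (ε β L N)/(2 N^{3/2} L) − β² L N }, such that the VC-LB iterates satisfy fes(q(z(T))) ≤ V(z(T)) ≤ ε. -/

import Mathlib

open Matrix

noncomputable section

/-- Euclidean norm of a vector in ℝ^{4N}, represented as four blocks of ℝ^N. -/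
def enorm4 {N : ℕ} (w : Fin 4 → Fin N → ℝ) : ℝ :=
  Real.sqrt (∑ b, ∑ i, w b i ^ 2)

/-- sign(x) = 1 if x ≥ 0 and −1 if x < 0. -/
def sgn (x : ℝ) : ℝ := if 0 ≤ x then 1 else -1

/-- The (linearized) voltage map v(q) = A q + d. -/
def volt {N : ℕ} (A : Matrix (Fin N) (Fin N) ℝ) (d : Fin N → ℝ) (q : Fin N → ℝ) :
    Fin N → ℝ :=
  A *ᵥ q + d

/-- q(z) = λ^min − λ^max + A⁻¹(μ^min − μ^max). -/
def qOf {N : ℕ} (A : Matrix (Fin N) (Fin N) ℝ) (z : Fin 4 → Fin N → ℝ) : Fin N → ℝ :=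
  z 0 - z 1 + A⁻¹ *ᵥ (z 2 - z 3)

/-- ∇D(z) = (v^min − v(q(z)), v(q(z)) − v^max, q^min − q(z), q(z) − q^max). -/
def gradD {N : ℕ} (A : Matrix (Fin N) (Fin N) ℝ) (d vmin vmax qmin qmax : Fin N → ℝ)
    (z : Fin 4 → Fin N → ℝ) : Fin 4 → Fin N → ℝ :=
  ![vmin - volt A d (qOf A z), volt A d (qOf A z) - vmax,
    qmin - qOf A z, qOf A z - qmax]

/-- V(z) = ‖z − ⌈z + ∇D(z)⌉₊‖. -/
def Vfun {N : ℕ} (A : Matrix (Fin N) (Fin N) ℝ) (d vmin vmax qmin qmax : Fin N → ℝ)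
    (z : Fin 4 → Fin N → ℝ) : ℝ :=
  enorm4 (fun b i => z b i - max (z b i + gradD A d vmin vmax qmin qmax z b i) 0)

/-- The Lagrangian dual function
D(z) = inf_q [ (1/2) qᵀAq + (λ^min)ᵀ(v^min − v(q)) + (λ^max)ᵀ(v(q) − v^max)
  + (μ^min)ᵀ(q^min − q) + (μ^max)ᵀ(q − q^max) ]. -/
def dualFun {N : ℕ} (A : Matrix (Fin N) (Fin N) ℝ) (d vmin vmax qmin qmax : Fin N → ℝ)
    (z : Fin 4 → Fin N → ℝ) : ℝ :=
  ⨅ q : Fin N → ℝ,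
    ((1 / 2) * (q ⬝ᵥ A *ᵥ q) + (z 0) ⬝ᵥ (vmin - volt A d q)
      + (z 1) ⬝ᵥ (volt A d q - vmax) + (z 2) ⬝ᵥ (qmin - q) + (z 3) ⬝ᵥ (q - qmax))

/-- fes(q) = Euclidean distance from (q, v(q)) to the box [q^min,q^max] × [v^min,v^max]. -/
def fes {N : ℕ} (A : Matrix (Fin N) (Fin N) ℝ) (d vmin vmax qmin qmax : Fin N → ℝ)
    (q : Fin N → ℝ) : ℝ :=
  sInf { r : ℝ | ∃ y1 y2 : Fin N → ℝ,
    (∀ i, qmin i ≤ y1 i ∧ y1 i ≤ qmax i) ∧ (∀ i, vmin i ≤ y2 i ∧ y2 i ≤ vmax i) ∧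
    r = Real.sqrt ((∑ i, (q i - y1 i) ^ 2) + ∑ i, (volt A d q i - y2 i) ^ 2) }

/-!
For fixed `z` the Lagrangian is minimised over `q` at `qOf A z`, which is linear in `z`. Hence the
dual function `D` is a concave quadratic, the eigenvalue bound controls its curvature, and
`D (z + w) ≥ D z + ⟨∇D z, w⟩ - L / 2 * ‖w‖ ^ 2`.

The right-hand side splits into coordinates. Where VC-LB takes a gradient step, the gain is at least
`α - L / 2 * α ^ 2` times the squared coordinate of the residual `⌈z + ∇D z⌉₊ - z`. Where it takes a
sign step, the loss is at most `L / 2 * β ^ 2`, and a residual of size `ε / (2 * √N)` contributes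
`β * ε / (2 * √N)` to the gain. While `V z > ε`, at least half of the squared residual lies in one
of the two groups, so `D` rises by at least `δ(α, β)`. By weak duality `D` is bounded above, so this
cannot happen more than `⌈(D* - D (z 0)) / δ(α, β)⌉` times.

Finally `fes ≤ V`, because the distance of a coordinate to its interval is the violation of one
constraint, and the residual of a violated constraint is at least its violation.
-/

section QuadraticForm

variable {n : Type*} [Fintype n]

lemma dotProduct_mulVec_comm {R : Type*} [CommSemiring R] {A : Matrix n n R} (hA : A.IsSymm)
    (x y : n → R) : x ⬝ᵥ A *ᵥ y = y ⬝ᵥ A *ᵥ x := by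
  rw [dotProduct_mulVec, dotProduct_comm, ← mulVec_transpose, hA.eq]

lemma dotProduct_mulVec_self_le_of_eigenbasis {ι : Type*} [Fintype ι]
    (b : OrthonormalBasis ι ℝ (EuclideanSpace ℝ n)) {B : Matrix n n ℝ} {c : ι → ℝ} {C : ℝ}
    (hb : ∀ i, B *ᵥ (b i).ofLp = c i • (b i).ofLp) (hc : ∀ i, c i ≤ C) (x : n → ℝ) :
    x ⬝ᵥ B *ᵥ x ≤ C * (x ⬝ᵥ x) := by
  have hx : x = ∑ i, (x ⬝ᵥ (b i).ofLp) • (b i).ofLp := by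
    simpa only [EuclideanSpace.inner_eq_star_dotProduct, star_trivial, WithLp.ofLp_sum,
      WithLp.ofLp_smul] using congrArg WithLp.ofLp (b.sum_repr' (WithLp.toLp 2 x)).symm
  have hxx : x ⬝ᵥ x = ∑ i, (x ⬝ᵥ (b i).ofLp) ^ 2 := by
    conv_lhs => enter [2]; rw [hx]
    simp only [dotProduct_sum, dotProduct_smul, smul_eq_mul, sq]
  have hxBx : x ⬝ᵥ B *ᵥ x = ∑ i, c i * (x ⬝ᵥ (b i).ofLp) ^ 2 := by
    conv_lhs => enter [2, 2]; rw [hx]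
    simp only [mulVec_sum, mulVec_smul, hb, dotProduct_sum, dotProduct_smul, smul_eq_mul, sq,
      mul_left_comm]
  rw [hxx, hxBx, Finset.mul_sum]
  gcongr with i
  exact hc i

variable [DecidableEq n] {A : Matrix n n ℝ}

lemma dotProduct_add_inv_mulVec_self_le (hA : A.PosDef) {C : ℝ}
    (hC : ∀ i, hA.1.eigenvalues i + (hA.1.eigenvalues i)⁻¹ ≤ C) (x : n → ℝ) :
    x ⬝ᵥ (A + A⁻¹) *ᵥ x ≤ C * (x ⬝ᵥ x) := by
  refine dotProduct_mulVec_self_le_of_eigenbasis hA.1.eigenvectorBasis (fun i => ?_) hC x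
  have heig := hA.1.mulVec_eigenvectorBasis i
  have hinv : A⁻¹ *ᵥ (hA.1.eigenvectorBasis i).ofLp =
      (hA.1.eigenvalues i)⁻¹ • (hA.1.eigenvectorBasis i).ofLp := by
    rw [eq_inv_smul_iff₀ (hA.eigenvalues_pos i).ne', ← mulVec_smul, ← heig, mulVec_mulVec,
      nonsing_inv_mul _ hA.det_pos.ne'.isUnit, one_mulVec]
  rw [add_mulVec, heig, hinv, add_smul]

-- The difference of the two sides is `(x - A y)ᵀ A⁻¹ (x - A y)`.
lemma dotProduct_mulVec_add_inv_mulVec_self_le (hA : A.PosDef) (x y : n → ℝ) :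
    (x + A⁻¹ *ᵥ y) ⬝ᵥ A *ᵥ (x + A⁻¹ *ᵥ y) ≤ x ⬝ᵥ (A + A⁻¹) *ᵥ x + y ⬝ᵥ (A + A⁻¹) *ᵥ y := by
  have hsq : 0 ≤ (x - A *ᵥ y) ⬝ᵥ A⁻¹ *ᵥ (x - A *ᵥ y) :=
    hA.inv.posSemidef.dotProduct_mulVec_nonneg (x - A *ᵥ y)
  have hdet : IsUnit A.det := hA.det_pos.ne'.isUnit
  have hcomm := dotProduct_mulVec_comm (isHermitian_iff_isSymm.1 hA.1)
  have hcomm' := dotProduct_mulVec_comm (isHermitian_iff_isSymm.1 hA.inv.1)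
  simp only [mulVec_add, mulVec_sub, add_mulVec, dotProduct_add, dotProduct_sub, add_dotProduct,
    sub_dotProduct, mulVec_mulVec, mul_nonsing_inv _ hdet, nonsing_inv_mul _ hdet, one_mulVec,
    hcomm (A⁻¹ *ᵥ y) x, hcomm' (A *ᵥ y) x, dotProduct_comm (A *ᵥ y) y,
    dotProduct_comm (A⁻¹ *ᵥ y) y] at hsq ⊢
  linarith

end QuadraticForm

section Dual

variable {N : ℕ}

/-- The constraints `c(q) = (v^min - v(q), v(q) - v^max, q^min - q, q - q^max)` of the primal
problem in the order of the four blocks of dual variables, feasibility being `c(q) ≤ 0`. -/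
def constraintFun (A : Matrix (Fin N) (Fin N) ℝ) (d vmin vmax qmin qmax q : Fin N → ℝ) :
    Fin 4 → Fin N → ℝ :=
  ![vmin - volt A d q, volt A d q - vmax, qmin - q, q - qmax]

/-- The Lagrangian `½ qᵀAq + ∑ᵦ z_bᵀ c(q)_b` of the primal problem, whose infimum over `q` is the
dual function. -/
def lagrangian (A : Matrix (Fin N) (Fin N) ℝ) (d vmin vmax qmin qmax q : Fin N → ℝ)
    (z : Fin 4 → Fin N → ℝ) : ℝ :=
  1 / 2 * (q ⬝ᵥ A *ᵥ q) + ∑ b, z b ⬝ᵥ constraintFun A d vmin vmax qmin qmax q b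

variable {A : Matrix (Fin N) (Fin N) ℝ} {d vmin vmax qmin qmax : Fin N → ℝ}

lemma dualFun_eq_iInf_lagrangian (z : Fin 4 → Fin N → ℝ) :
    dualFun A d vmin vmax qmin qmax z = ⨅ q, lagrangian A d vmin vmax qmin qmax q z := by
  simp only [dualFun, lagrangian, constraintFun, Fin.sum_univ_four, cons_val, add_assoc]

lemma mulVec_qOf (hdet : IsUnit A.det) (z : Fin 4 → Fin N → ℝ) :
    A *ᵥ qOf A z = A *ᵥ (z 0 - z 1) + (z 2 - z 3) := by
  rw [qOf, mulVec_add, mulVec_mulVec, mul_nonsing_inv _ hdet, one_mulVec]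

lemma qOf_add (z w : Fin 4 → Fin N → ℝ) : qOf A (z + w) = qOf A z + qOf A w := by
  simp only [qOf, Pi.add_apply, mulVec_sub, mulVec_add]
  abel

variable (d vmin vmax qmin qmax) in
lemma sum_dotProduct_constraintFun_add (hA : A.IsSymm) (hdet : IsUnit A.det)
    (q p : Fin N → ℝ) (z : Fin 4 → Fin N → ℝ) :
    ∑ b, z b ⬝ᵥ constraintFun A d vmin vmax qmin qmax (q + p) b =
      ∑ b, z b ⬝ᵥ constraintFun A d vmin vmax qmin qmax q b - p ⬝ᵥ A *ᵥ qOf A z := by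
  rw [mulVec_qOf hdet, dotProduct_add, dotProduct_mulVec_comm hA]
  simp only [Fin.sum_univ_four, constraintFun, volt, cons_val, mulVec_add, dotProduct_sub,
    dotProduct_add, sub_dotProduct, dotProduct_comm p]
  ring

-- The linear terms in `p` cancel because `qOf A z` is the stationary point of the Lagrangian.
variable (d vmin vmax qmin qmax) in
lemma lagrangian_qOf_add (hA : A.IsSymm) (hdet : IsUnit A.det) (p : Fin N → ℝ)
    (z : Fin 4 → Fin N → ℝ) :
    lagrangian A d vmin vmax qmin qmax (qOf A z + p) z =
      lagrangian A d vmin vmax qmin qmax (qOf A z) z + 1 / 2 * (p ⬝ᵥ A *ᵥ p) := by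
  rw [lagrangian, sum_dotProduct_constraintFun_add _ _ _ _ _ hA hdet, lagrangian]
  simp only [mulVec_add, dotProduct_add, add_dotProduct, dotProduct_mulVec_comm hA (qOf A z) p]
  ring

lemma isLeast_lagrangian_qOf (hA : A.PosDef) (z : Fin 4 → Fin N → ℝ) :
    IsLeast (Set.range fun q => lagrangian A d vmin vmax qmin qmax q z)
      (lagrangian A d vmin vmax qmin qmax (qOf A z) z) := by
  refine ⟨⟨_, rfl⟩, ?_⟩
  rintro _ ⟨q, rfl⟩
  have hnonneg : 0 ≤ (q - qOf A z) ⬝ᵥ A *ᵥ (q - qOf A z) :=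
    hA.posSemidef.dotProduct_mulVec_nonneg (q - qOf A z)
  have hexpand := lagrangian_qOf_add d vmin vmax qmin qmax (isHermitian_iff_isSymm.1 hA.1)
    hA.det_pos.ne'.isUnit (q - qOf A z) z
  rw [add_sub_cancel] at hexpand
  linarith

lemma dualFun_eq_lagrangian_qOf (hA : A.PosDef) (z : Fin 4 → Fin N → ℝ) :
    dualFun A d vmin vmax qmin qmax z = lagrangian A d vmin vmax qmin qmax (qOf A z) z := by
  rw [dualFun_eq_iInf_lagrangian]
  exact (isLeast_lagrangian_qOf hA z).csInf_eq

lemma dualFun_le_of_feasible (hA : A.PosDef) {q : Fin N → ℝ}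
    (hq : ∀ i, qmin i ≤ q i ∧ q i ≤ qmax i)
    (hv : ∀ i, vmin i ≤ volt A d q i ∧ volt A d q i ≤ vmax i)
    {z : Fin 4 → Fin N → ℝ} (hz : ∀ b i, 0 ≤ z b i) :
    dualFun A d vmin vmax qmin qmax z ≤ 1 / 2 * (q ⬝ᵥ A *ᵥ q) := by
  have hc : ∀ b i, constraintFun A d vmin vmax qmin qmax q b i ≤ 0 := by
    intro b i
    fin_cases b
    exacts [sub_nonpos.2 (hv i).1, sub_nonpos.2 (hv i).2, sub_nonpos.2 (hq i).1,
      sub_nonpos.2 (hq i).2]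
  calc dualFun A d vmin vmax qmin qmax z
      ≤ lagrangian A d vmin vmax qmin qmax q z := by
        rw [dualFun_eq_lagrangian_qOf hA]
        exact (isLeast_lagrangian_qOf hA z).2 ⟨q, rfl⟩
    _ ≤ 1 / 2 * (q ⬝ᵥ A *ᵥ q) := add_le_of_nonpos_right <| Finset.sum_nonpos fun b _ =>
        Finset.sum_nonpos fun i _ => mul_nonpos_of_nonneg_of_nonpos (hz b i) (hc b i)

lemma bddAbove_dualFun_image (hA : A.PosDef)
    (hfeas : ∃ q : Fin N → ℝ, (∀ i, qmin i ≤ q i ∧ q i ≤ qmax i) ∧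
      ∀ i, vmin i ≤ volt A d q i ∧ volt A d q i ≤ vmax i) :
    BddAbove (dualFun A d vmin vmax qmin qmax '' {z | ∀ b i, 0 ≤ z b i}) := by
  obtain ⟨q, hq, hv⟩ := hfeas
  refine ⟨1 / 2 * (q ⬝ᵥ A *ᵥ q), ?_⟩
  rintro _ ⟨z, hz, rfl⟩
  exact dualFun_le_of_feasible hA hq hv hz

lemma dualFun_add (hA : A.PosDef) (z w : Fin 4 → Fin N → ℝ) :
    dualFun A d vmin vmax qmin qmax (z + w) = dualFun A d vmin vmax qmin qmax z +
      ∑ b, w b ⬝ᵥ gradD A d vmin vmax qmin qmax z b - 1 / 2 * (qOf A w ⬝ᵥ A *ᵥ qOf A w) := by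
  have hgrad : gradD A d vmin vmax qmin qmax z =
      constraintFun A d vmin vmax qmin qmax (qOf A z) := rfl
  rw [dualFun_eq_lagrangian_qOf hA, dualFun_eq_lagrangian_qOf hA, lagrangian, qOf_add, hgrad]
  have hsymm : A.IsSymm := isHermitian_iff_isSymm.1 hA.1
  have hdet : IsUnit A.det := hA.det_pos.ne'.isUnit
  have hz := lagrangian_qOf_add d vmin vmax qmin qmax hsymm hdet (qOf A w) z
  have hw := sum_dotProduct_constraintFun_add d vmin vmax qmin qmax hsymm hdet (qOf A z)
    (qOf A w) w
  rw [lagrangian] at hz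
  simp only [Pi.add_apply, add_dotProduct, Finset.sum_add_distrib] at hz hw ⊢
  linarith

lemma qOf_dotProduct_mulVec_qOf_le (hA : A.PosDef) {L : ℝ} (hL0 : 0 ≤ L)
    (hL : ∀ i, 2 * (hA.1.eigenvalues i + (hA.1.eigenvalues i)⁻¹) ≤ L)
    (w : Fin 4 → Fin N → ℝ) :
    qOf A w ⬝ᵥ A *ᵥ qOf A w ≤ L * ∑ b, ∑ i, w b i ^ 2 := by
  have hbound := dotProduct_add_inv_mulVec_self_le hA (C := L / 2) fun i => by linarith [hL i]
  have hsub (x y : Fin N → ℝ) :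
      (x - y) ⬝ᵥ (x - y) ≤ 2 * (∑ i, x i ^ 2 + ∑ i, y i ^ 2) := by
    rw [← Finset.sum_add_distrib, Finset.mul_sum]
    refine Finset.sum_le_sum fun i _ => ?_
    simp only [Pi.sub_apply]
    linarith [sq_nonneg (x i + y i)]
  calc qOf A w ⬝ᵥ A *ᵥ qOf A w
      ≤ L / 2 * ((w 0 - w 1) ⬝ᵥ (w 0 - w 1)) + L / 2 * ((w 2 - w 3) ⬝ᵥ (w 2 - w 3)) :=
        (dotProduct_mulVec_add_inv_mulVec_self_le hA _ _).trans
          (add_le_add (hbound _) (hbound _))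
    _ ≤ L / 2 * (2 * (∑ i, w 0 i ^ 2 + ∑ i, w 1 i ^ 2)) +
        L / 2 * (2 * (∑ i, w 2 i ^ 2 + ∑ i, w 3 i ^ 2)) := by gcongr <;> exact hsub _ _
    _ = L * ∑ b, ∑ i, w b i ^ 2 := by
        rw [Fin.sum_univ_four]
        ring

variable (d vmin vmax qmin qmax) in
lemma dualFun_add_sum_le (hA : A.PosDef) {L : ℝ} (hL0 : 0 ≤ L)
    (hL : ∀ i, 2 * (hA.1.eigenvalues i + (hA.1.eigenvalues i)⁻¹) ≤ L)
    (z w : Fin 4 → Fin N → ℝ) :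
    dualFun A d vmin vmax qmin qmax z +
        ∑ b, ∑ i, (gradD A d vmin vmax qmin qmax z b i * w b i - L / 2 * w b i ^ 2) ≤
      dualFun A d vmin vmax qmin qmax (z + w) := by
  have hquad := qOf_dotProduct_mulVec_qOf_le hA hL0 hL w
  have hlin : ∑ b, w b ⬝ᵥ gradD A d vmin vmax qmin qmax z b =
      ∑ b, ∑ i, gradD A d vmin vmax qmin qmax z b i * w b i :=
    Finset.sum_congr rfl fun b _ => dotProduct_comm _ _
  simp only [Finset.sum_sub_distrib, ← Finset.mul_sum]
  rw [dualFun_add hA, hlin]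
  linarith

end Dual

section ProjectedStep

/-- The increment `max (z + h) 0 - z` of a coordinate `z` that moves by `h` and is projected onto
`[0, ∞)`, written without the cancellation; see `max_add_sub_eq_projIncr`. -/
def projIncr (z h : ℝ) : ℝ := max h (-z)

lemma max_add_sub_eq_projIncr (z h : ℝ) : max (z + h) 0 - z = projIncr z h := by
  rw [projIncr, ← max_sub_sub_right, add_sub_cancel_left, zero_sub]

variable {z g α β L r : ℝ}

lemma sq_projIncr_le_mul (hz : 0 ≤ z) (h : ℝ) : projIncr z h ^ 2 ≤ h * projIncr z h := by
  unfold projIncr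
  rcases le_total h (-z) with hhz | hhz
  · rw [max_eq_right hhz]
    nlinarith
  · rw [max_eq_left hhz, sq]

lemma abs_projIncr_le (hz : 0 ≤ z) (h : ℝ) : |projIncr z h| ≤ |h| :=
  abs_le.2 ⟨(neg_abs_le h).trans (le_max_left _ _),
    max_le (le_abs_self h) ((neg_nonpos.2 hz).trans (abs_nonneg h))⟩

lemma mul_abs_projIncr_le (hα : 0 ≤ α) (hα1 : α ≤ 1) (hz : 0 ≤ z) (g : ℝ) :
    α * |projIncr z g| ≤ |projIncr z (α * g)| := by
  have hαz : α * z ≤ z := mul_le_of_le_one_left hz hα1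
  have hscale : α * |projIncr z g| = |α * projIncr z g| := by rw [abs_mul, abs_of_nonneg hα]
  rw [hscale]
  unfold projIncr
  rcases le_total 0 g with hg | hg
  · rw [max_eq_left ((neg_nonpos.2 hz).trans hg),
      max_eq_left ((neg_nonpos.2 hz).trans (mul_nonneg hα hg))]
  · refine abs_le_abs_of_nonpos ?_ ?_
    · exact mul_nonpos_of_nonneg_of_nonpos hα (max_le hg (neg_nonpos.2 hz))
    · rw [mul_max_of_nonneg _ _ hα]
      exact max_le_max le_rfl (by linarith)

lemma mul_sq_projIncr_le_gradientStep (hα : 0 < α) (hα1 : α ≤ 1) (hαL : α * L ≤ 2)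
    (hz : 0 ≤ z) (g : ℝ) :
    (α - L / 2 * α ^ 2) * projIncr z g ^ 2 ≤
      g * projIncr z (α * g) - L / 2 * projIncr z (α * g) ^ 2 := by
  have hcoef : 0 ≤ 1 / α - L / 2 := by
    rw [sub_nonneg, le_div_iff₀ hα]
    linarith
  have hshrink : α ^ 2 * projIncr z g ^ 2 ≤ projIncr z (α * g) ^ 2 := by
    rw [← sq_abs (projIncr z g), ← sq_abs (projIncr z (α * g)), ← mul_pow]
    gcongr
    exact mul_abs_projIncr_le hα.le hα1 hz g
  have hascent : 1 / α * projIncr z (α * g) ^ 2 ≤ g * projIncr z (α * g) := by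
    rw [one_div_mul_eq_div, div_le_iff₀' hα, ← mul_assoc]
    exact sq_projIncr_le_mul hz (α * g)
  calc (α - L / 2 * α ^ 2) * projIncr z g ^ 2
      = (1 / α - L / 2) * (α ^ 2 * projIncr z g ^ 2) := by field_simp
    _ ≤ (1 / α - L / 2) * projIncr z (α * g) ^ 2 := by gcongr
    _ ≤ g * projIncr z (α * g) - L / 2 * projIncr z (α * g) ^ 2 := by linarith

lemma sgn_mul_self (x : ℝ) : sgn x * x = |x| := by
  unfold sgn
  split_ifs with hx
  · rw [one_mul, abs_of_nonneg hx]
  · rw [neg_one_mul, abs_of_neg (not_le.1 hx)]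

lemma abs_sgn (x : ℝ) : |sgn x| = 1 := by
  unfold sgn
  split_ifs <;> simp only [abs_neg, abs_one]

lemma sq_projIncr_signStep_le (hz : 0 ≤ z) (g : ℝ) : projIncr z (β * sgn g) ^ 2 ≤ β ^ 2 := by
  rw [sq_le_sq]
  simpa only [abs_mul, abs_sgn, mul_one] using abs_projIncr_le hz (β * sgn g)

lemma mul_projIncr_signStep_nonneg (hβ : 0 < β) (hz : 0 ≤ z) (g : ℝ) :
    0 ≤ g * projIncr z (β * sgn g) := by
  have hmul : 0 ≤ sgn g * projIncr z (β * sgn g) := by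
    have hsq := (sq_nonneg _).trans (sq_projIncr_le_mul hz (β * sgn g))
    rw [mul_assoc] at hsq
    exact nonneg_of_mul_nonneg_right hsq hβ
  have hg : g = |g| * sgn g := by
    rw [← sgn_mul_self, mul_right_comm, ← sq, ← sq_abs (sgn g), abs_sgn, one_pow, one_mul]
  calc (0 : ℝ) ≤ |g| * (sgn g * projIncr z (β * sgn g)) := mul_nonneg (abs_nonneg g) hmul
    _ = g * projIncr z (β * sgn g) := by rw [← mul_assoc, ← hg]

-- A residual of size at least `β` leaves room for the full sign step: if `g < 0` then `β ≤ z`.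
lemma mul_le_mul_projIncr_signStep (hβ : 0 ≤ β) (hβr : β ≤ r) (hz : 0 ≤ z)
    (hr : r ≤ |projIncr z g|) : β * r ≤ g * projIncr z (β * sgn g) := by
  have hfull : -z ≤ β * sgn g := by
    unfold sgn
    split_ifs with hg
    · linarith
    · have hle : projIncr z g ≤ 0 := max_le (not_le.1 hg).le (neg_nonpos.2 hz)
      have hge : -z ≤ projIncr z g := le_max_right _ _
      rw [abs_of_nonpos hle] at hr
      linarith
  calc β * r ≤ β * |g| := by gcongr; exact hr.trans (abs_projIncr_le hz g)
    _ = g * projIncr z (β * sgn g) := by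
        rw [projIncr, max_eq_left hfull, ← sgn_mul_self]
        ring

lemma sq_sub_clamp_le {l u x a b : ℝ} (hlu : l ≤ u) (ha : 0 ≤ a) (hb : 0 ≤ b) :
    (x - max l (min x u)) ^ 2 ≤ projIncr a (l - x) ^ 2 + projIncr b (x - u) ^ 2 := by
  rcases le_total x l with hxl | hlx
  · rw [min_eq_left (hxl.trans hlu), max_eq_left hxl, projIncr, max_eq_left (by linarith)]
    linarith [sq_nonneg (projIncr b (x - u)), sub_sq_comm x l]
  rcases le_total x u with hxu | hux
  · rw [min_eq_left hxu, max_eq_right hlx, sub_self, zero_pow two_ne_zero]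
    positivity
  · rw [min_eq_right hux, max_eq_right hlu, projIncr.eq_def b, max_eq_left (by linarith)]
    linarith [sq_nonneg (projIncr a (l - x))]

end ProjectedStep

section MixedStep

variable {κ : Type*} {z g s : κ → ℝ} {α β L r : ℝ} {S : Finset κ}

lemma mul_sum_sq_projIncr_le_of_gradientStep (hα : 0 < α) (hα1 : α ≤ 1) (hαL : α * L ≤ 2)
    (hz : ∀ k ∈ S, 0 ≤ z k) (hs : ∀ k ∈ S, s k = projIncr (z k) (α * g k)) :
    (α - L / 2 * α ^ 2) * ∑ k ∈ S, projIncr (z k) (g k) ^ 2 ≤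
      ∑ k ∈ S, (g k * s k - L / 2 * s k ^ 2) := by
  rw [Finset.mul_sum]
  refine Finset.sum_le_sum fun k hk => ?_
  rw [hs k hk]
  exact mul_sq_projIncr_le_gradientStep hα hα1 hαL (hz k hk) (g k)

lemma sum_mul_sub_card_mul_le_of_signStep (hL : 0 ≤ L) (hz : ∀ k ∈ S, 0 ≤ z k)
    (hs : ∀ k ∈ S, s k = projIncr (z k) (β * sgn (g k))) :
    ∑ k ∈ S, g k * s k - S.card * (L / 2 * β ^ 2) ≤
      ∑ k ∈ S, (g k * s k - L / 2 * s k ^ 2) := by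
  rw [Finset.sum_sub_distrib, ← nsmul_eq_mul]
  refine sub_le_sub_left (Finset.sum_le_card_nsmul _ _ _ fun k hk => ?_) _
  rw [hs k hk]
  exact mul_le_mul_of_nonneg_left (sq_projIncr_signStep_le (hz k hk) (g k)) (by positivity)

lemma sum_mul_nonneg_of_signStep (hβ : 0 < β) (hz : ∀ k ∈ S, 0 ≤ z k)
    (hs : ∀ k ∈ S, s k = projIncr (z k) (β * sgn (g k))) : 0 ≤ ∑ k ∈ S, g k * s k :=
  Finset.sum_nonneg fun k hk => hs k hk ▸ mul_projIncr_signStep_nonneg hβ (hz k hk) (g k)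

-- By pigeonhole some coordinate has residual at least `r`.
lemma mul_le_sum_mul_of_signStep (hβ : 0 < β) (hβr : β ≤ r) (hz : ∀ k ∈ S, 0 ≤ z k)
    (hs : ∀ k ∈ S, s k = projIncr (z k) (β * sgn (g k)))
    (hr : S.card * r ^ 2 < ∑ k ∈ S, projIncr (z k) (g k) ^ 2) :
    β * r ≤ ∑ k ∈ S, g k * s k := by
  obtain ⟨k, hk, hrk⟩ : ∃ k ∈ S, r ^ 2 < projIncr (z k) (g k) ^ 2 :=
    Finset.exists_lt_of_sum_lt (by rwa [Finset.sum_const, nsmul_eq_mul])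
  calc β * r ≤ g k * s k := by
        rw [hs k hk]
        exact mul_le_mul_projIncr_signStep hβ.le hβr (hz k hk)
          ((le_abs_self r).trans (sq_lt_sq.1 hrk).le)
    _ ≤ ∑ k ∈ S, g k * s k := Finset.single_le_sum (f := fun k => g k * s k)
        (fun j hj => hs j hj ▸ mul_projIncr_signStep_nonneg hβ (hz j hj) (g j)) hk

-- At least half of the squared residual sits in the gradient coordinates or in the sign ones.
lemma min_le_sum_of_mixedStep [Fintype κ] {p : κ → Prop} [DecidablePred p] {ρ : ℝ}
    (hL : 0 ≤ L) (hα : 0 < α) (hα1 : α ≤ 1) (hαL : α * L ≤ 2) (hβ : 0 < β) (hβr : β ≤ r)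
    (hz : ∀ k, 0 ≤ z k)
    (hs : ∀ k, s k = projIncr (z k) (if p k then α * g k else β * sgn (g k)))
    (hr : (Finset.univ.filter fun k => ¬p k).card * r ^ 2 ≤ ρ / 2)
    (hρ : ρ < ∑ k, projIncr (z k) (g k) ^ 2) :
    min ((α - L / 2 * α ^ 2) * (ρ / 2)) (β * r) -
        (Finset.univ.filter fun k => ¬p k).card * (L / 2 * β ^ 2) ≤
      ∑ k, (g k * s k - L / 2 * s k ^ 2) := by
  have hsgrad : ∀ k ∈ Finset.univ.filter p, s k = projIncr (z k) (α * g k) := fun k hk => by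
    rw [hs, if_pos (Finset.mem_filter.1 hk).2]
  have hssign : ∀ k ∈ Finset.univ.filter fun k => ¬p k,
      s k = projIncr (z k) (β * sgn (g k)) := fun k hk => by
    rw [hs, if_neg (Finset.mem_filter.1 hk).2]
  have hgrad := mul_sum_sq_projIncr_le_of_gradientStep hα hα1 hαL (fun k _ => hz k) hsgrad
  have hsign := sum_mul_sub_card_mul_le_of_signStep hL (fun k _ => hz k) hssign
  have hcoef : 0 ≤ α - L / 2 * α ^ 2 := by nlinarith
  rw [← Finset.sum_filter_add_sum_filter_not _ p] at hρ ⊢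
  rcases le_or_gt (ρ / 2) (∑ k with p k, projIncr (z k) (g k) ^ 2) with hhalf | hhalf
  · have hnonneg := sum_mul_nonneg_of_signStep hβ (fun k _ => hz k) hssign
    linarith [min_le_left ((α - L / 2 * α ^ 2) * (ρ / 2)) (β * r),
      mul_le_mul_of_nonneg_left hhalf hcoef]
  · have hgain := mul_le_sum_mul_of_signStep hβ hβr (fun k _ => hz k) hssign (by linarith)
    have hnonneg : 0 ≤ (α - L / 2 * α ^ 2) * ∑ k with p k, projIncr (z k) (g k) ^ 2 :=
      mul_nonneg hcoef (Finset.sum_nonneg fun _ _ => sq_nonneg _)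
    linarith [min_le_right ((α - L / 2 * α ^ 2) * (ρ / 2)) (β * r)]

end MixedStep

section Rate

variable {N : ℕ} {L ε α β : ℝ}

/-- The guaranteed increase `δ(α, β)` of the dual function along one VC-LB iteration. -/
def ascentRate (N : ℕ) (L ε α β : ℝ) : ℝ :=
  min ((α - (L / 2) * α ^ 2) * (ε ^ 2 / 2) - (N : ℝ) * L * β ^ 2)
    (ε * β * L * (N : ℝ) / (2 * (N : ℝ) ^ ((3 : ℝ) / 2) * L) - β ^ 2 * L * (N : ℝ))

lemma natCast_rpow_three_halves (hN : 0 < N) : (N : ℝ) ^ ((3 : ℝ) / 2) = N * √N := by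
  rw [show (3 : ℝ) / 2 = 1 + 1 / 2 by norm_num, Real.rpow_add (Nat.cast_pos.2 hN), Real.rpow_one,
    Real.sqrt_eq_rpow]

lemma ascentRate_eq (hN : 0 < N) (hL : L ≠ 0) :
    ascentRate N L ε α β =
      min ((α - L / 2 * α ^ 2) * (ε ^ 2 / 2)) (β * (ε / (2 * √N))) - N * L * β ^ 2 := by
  have hN' : (N : ℝ) ≠ 0 := Nat.cast_ne_zero.2 hN.ne'
  have hterm : ε * β * L * N / (2 * (N * √N) * L) = β * (ε / (2 * √N)) := by field_simp
  rw [ascentRate, natCast_rpow_three_halves hN, hterm, ← min_sub_sub_right]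
  congr 2
  ring

lemma mul_lt_of_lt_div_rpow (hN : 0 < N) (hL : 0 < L)
    (hβ : β < ε / (2 * (N : ℝ) ^ ((3 : ℝ) / 2) * L)) : β * (N * L) < ε / (2 * √N) := by
  have : (0 : ℝ) < N := Nat.cast_pos.2 hN
  have hden : 2 * √N * (N * L) = 2 * (N * √N) * L := by ring
  rwa [← lt_div_iff₀ (by positivity), div_div, hden, ← natCast_rpow_three_halves hN]

lemma ascentRate_pos (hN : 0 < N) (hL : 0 < L) (hβ0 : 0 < β)
    (hβ : β < min (ε / (2 * (N : ℝ) ^ ((3 : ℝ) / 2) * L))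
      (√(α * (1 - L * α / 2) * ε ^ 2 / (2 * (N : ℝ) * L)))) :
    0 < ascentRate N L ε α β := by
  have : (0 : ℝ) < N := Nat.cast_pos.2 hN
  obtain ⟨hβ_lin, hβ_sqrt⟩ := lt_min_iff.1 hβ
  rw [ascentRate_eq hN hL.ne', sub_pos]
  refine lt_min ?_ ?_
  · have hsq := (Real.lt_sqrt hβ0.le).1 hβ_sqrt
    rw [lt_div_iff₀ (by positivity)] at hsq
    linarith
  · calc N * L * β ^ 2 = β * (β * (N * L)) := by ring
      _ < β * (ε / (2 * √N)) := by
        gcongr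
        exact mul_lt_of_lt_div_rpow hN hL hβ_lin

lemma two_le_add_inv {x : ℝ} (hx : 0 < x) : 2 ≤ x + x⁻¹ := by
  have hsq : x + x⁻¹ - 2 = x⁻¹ * (x - 1) ^ 2 := by
    field_simp
    ring
  have hnonneg : 0 ≤ x⁻¹ * (x - 1) ^ 2 := by positivity
  linarith

lemma exists_le_ceil_of_ascent {K : Type*} [Field K] [LinearOrder K] [IsStrictOrderedRing K]
    [FloorSemiring K] {f : ℕ → K} {p : ℕ → Prop} {M δ : K} (hδ : 0 < δ) (hM : ∀ t, f t ≤ M)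
    (hascent : ∀ t, ¬p t → f t + δ ≤ f (t + 1)) : ∃ T ≤ ⌈(M - f 0) / δ⌉₊, p T := by
  by_contra! hnot
  have hgrow : ∀ t ≤ ⌈(M - f 0) / δ⌉₊ + 1, f 0 + t * δ ≤ f t := by
    intro t ht
    induction t with
    | zero => simp
    | succ t ih =>
      have hstep := hascent t (hnot t (Nat.le_of_lt_succ ht))
      have hprev := ih (Nat.le_of_succ_le ht)
      push_cast
      linarith
  have hlast := (hgrow _ le_rfl).trans (hM _)
  have hceil := (div_le_iff₀ hδ).1 (Nat.le_ceil ((M - f 0) / δ))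
  push_cast at hlast
  linarith

end Rate

section Iteration

variable {N : ℕ} {A : Matrix (Fin N) (Fin N) ℝ} {d vmin vmax qmin qmax : Fin N → ℝ}

lemma Vfun_eq_sqrt_sum_sq_projIncr (z : Fin 4 → Fin N → ℝ) :
    Vfun A d vmin vmax qmin qmax z =
      √(∑ b, ∑ i, projIncr (z b i) (gradD A d vmin vmax qmin qmax z b i) ^ 2) := by
  simp only [Vfun, enorm4, ← max_add_sub_eq_projIncr, sub_sq_comm (z _ _)]

lemma fes_le_Vfun (hv : ∀ i, vmin i ≤ vmax i) (hq : ∀ i, qmin i ≤ qmax i)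
    {z : Fin 4 → Fin N → ℝ} (hz : ∀ b i, 0 ≤ z b i) :
    fes A d vmin vmax qmin qmax (qOf A z) ≤ Vfun A d vmin vmax qmin qmax z := by
  rw [Vfun_eq_sqrt_sum_sq_projIncr, fes]
  refine csInf_le_of_le ⟨0, ?_⟩ ⟨fun i => max (qmin i) (min (qOf A z i) (qmax i)),
    fun i => max (vmin i) (min (volt A d (qOf A z) i) (vmax i)),
    fun i => ⟨le_max_left _ _, max_le (hq i) (min_le_right _ _)⟩,
    fun i => ⟨le_max_left _ _, max_le (hv i) (min_le_right _ _)⟩, rfl⟩ (Real.sqrt_le_sqrt ?_)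
  · rintro _ ⟨_, _, -, -, rfl⟩
    exact Real.sqrt_nonneg _
  · simp only [Fin.sum_univ_four, ← Finset.sum_add_distrib]
    refine Finset.sum_le_sum fun i _ => ?_
    have hvolt := sq_sub_clamp_le (x := volt A d (qOf A z) i) (hv i) (hz 0 i) (hz 1 i)
    have hload := sq_sub_clamp_le (x := qOf A z i) (hq i) (hz 2 i) (hz 3 i)
    simp only [gradD, cons_val, Pi.sub_apply]
    linarith

lemma card_filter_signBlock (N : ℕ) :
    (Finset.univ.filter fun k : Fin 4 × Fin N => ¬(k.1 : ℕ) < 2).card = 2 * N := by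
  have hblocks : (Finset.univ.filter fun b : Fin 4 => ¬(b : ℕ) < 2).card = 2 := by decide
  rw [← Finset.univ_product_univ, Finset.filter_product_left fun b : Fin 4 => ¬(b : ℕ) < 2,
    Finset.card_product, hblocks, Finset.card_univ, Fintype.card_fin]

lemma dualFun_add_ascentRate_le (hN : 0 < N) (hA : A.PosDef) {L ε α β : ℝ} (hL0 : 0 < L)
    (hL : ∀ i, 2 * (hA.1.eigenvalues i + (hA.1.eigenvalues i)⁻¹) ≤ L)
    (hε : 0 ≤ ε) (hα0 : 0 < α) (hα1 : α ≤ 1) (hαL : α * L ≤ 2) (hβ0 : 0 < β)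
    (hβ : β ≤ ε / (2 * √N)) {z z' : Fin 4 → Fin N → ℝ} (hz : ∀ b i, 0 ≤ z b i)
    (hstep : ∀ b i, z' b i =
      max (z b i + (if (b : ℕ) < 2 then α * gradD A d vmin vmax qmin qmax z b i
        else β * sgn (gradD A d vmin vmax qmin qmax z b i))) 0)
    (hV : ε < Vfun A d vmin vmax qmin qmax z) :
    dualFun A d vmin vmax qmin qmax z + ascentRate N L ε α β ≤
      dualFun A d vmin vmax qmin qmax z' := by
  have hN' : (N : ℝ) ≠ 0 := Nat.cast_ne_zero.2 hN.ne'
  have hcard : ((Finset.univ.filter fun k : Fin 4 × Fin N => ¬(k.1 : ℕ) < 2).card : ℝ) =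
      2 * N := by
    rw [card_filter_signBlock, Nat.cast_mul, Nat.cast_ofNat]
  have hr : (2 * N : ℝ) * (ε / (2 * √N)) ^ 2 = ε ^ 2 / 2 := by
    rw [div_pow, mul_pow, Real.sq_sqrt N.cast_nonneg]
    field_simp
  have hres : ε ^ 2 < ∑ k : Fin 4 × Fin N,
      projIncr (z k.1 k.2) (gradD A d vmin vmax qmin qmax z k.1 k.2) ^ 2 := by
    rwa [Vfun_eq_sqrt_sum_sq_projIncr, Real.lt_sqrt hε, ← Fintype.sum_prod_type'] at hV
  have hgain := min_le_sum_of_mixedStep (κ := Fin 4 × Fin N) (p := fun k => (k.1 : ℕ) < 2)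
    (s := fun k => (z' - z) k.1 k.2) hL0.le hα0 hα1 hαL hβ0 hβ (fun k => hz k.1 k.2)
    (fun k => by simp only [Pi.sub_apply, hstep, max_add_sub_eq_projIncr])
    (by rw [hcard, hr]) hres
  have hsmooth := dualFun_add_sum_le d vmin vmax qmin qmax hA hL0.le hL z (z' - z)
  rw [add_sub_cancel, ← Fintype.sum_prod_type'] at hsmooth
  rw [hcard] at hgain
  rw [ascentRate_eq hN hL0.ne']
  linarith

theorem stmt_9_general (N : ℕ) (hN : 0 < N) (A : Matrix (Fin N) (Fin N) ℝ) (hA : A.PosDef)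
    (d vmin vmax qmin qmax : Fin N → ℝ)
    (hfeas : ∃ q : Fin N → ℝ, (∀ i, qmin i ≤ q i ∧ q i ≤ qmax i) ∧
      ∀ i, vmin i ≤ volt A d q i ∧ volt A d q i ≤ vmax i)
    (L : ℝ) (hL : ∀ i, 2 * (hA.1.eigenvalues i + (hA.1.eigenvalues i)⁻¹) ≤ L)
    (ε : ℝ) (hε : 0 < ε) (α β : ℝ) (hα0 : 0 < α) (hα : α < 2 / L) (hβ0 : 0 < β)
    (hβ : β < min (ε / (2 * (N : ℝ) ^ ((3 : ℝ) / 2) * L))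
      (√(α * (1 - L * α / 2) * ε ^ 2 / (2 * (N : ℝ) * L))))
    (ziter : ℕ → Fin 4 → Fin N → ℝ) (hz0 : ∀ b i, 0 ≤ ziter 0 b i)
    (hstep : ∀ t b i, ziter (t + 1) b i =
      max (ziter t b i + (if (b : ℕ) < 2 then α * gradD A d vmin vmax qmin qmax (ziter t) b i
        else β * sgn (gradD A d vmin vmax qmin qmax (ziter t) b i))) 0) :
    ∃ T : ℕ,
      T ≤ ⌈(sSup (dualFun A d vmin vmax qmin qmax '' {z | ∀ b i, 0 ≤ z b i})
              - dualFun A d vmin vmax qmin qmax (ziter 0)) / ascentRate N L ε α β⌉₊ ∧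
      fes A d vmin vmax qmin qmax (qOf A (ziter T))
          ≤ Vfun A d vmin vmax qmin qmax (ziter T) ∧
      Vfun A d vmin vmax qmin qmax (ziter T) ≤ ε := by
  have hL4 : 4 ≤ L := by linarith [hL ⟨0, hN⟩, two_le_add_inv (hA.eigenvalues_pos ⟨0, hN⟩)]
  have hL0 : 0 < L := by linarith
  have hαL : α * L < 2 := (lt_div_iff₀ hL0).1 hα
  have hα1 : α ≤ 1 := by nlinarith
  have hNL : 1 ≤ N * L := one_le_mul_of_one_le_of_one_le (Nat.one_le_cast.2 hN) (by linarith)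
  have hβr : β ≤ ε / (2 * √N) := (le_mul_of_one_le_right hβ0.le hNL).trans
    (mul_lt_of_lt_div_rpow hN hL0 (lt_min_iff.1 hβ).1).le
  have hnonneg : ∀ t b i, 0 ≤ ziter t b i := by
    rintro (_ | t) b i
    exacts [hz0 b i, hstep t b i ▸ le_max_right _ _]
  obtain ⟨T, hT, hVT⟩ := exists_le_ceil_of_ascent
    (p := fun t => Vfun A d vmin vmax qmin qmax (ziter t) ≤ ε)
    (ascentRate_pos hN hL0 hβ0 hβ)
    (fun t => le_csSup (bddAbove_dualFun_image hA hfeas) ⟨_, hnonneg t, rfl⟩)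
    (fun t ht => dualFun_add_ascentRate_le hN hA hL0 hL hε.le hα0 hα1 hαL.le hβ0 hβr
      (hnonneg t) (hstep t) (not_le.1 ht))
  obtain ⟨q, hq, hv⟩ := hfeas
  exact ⟨T, hT, fes_le_Vfun (fun i => (hv i).1.trans (hv i).2)
    (fun i => (hq i).1.trans (hq i).2) (hnonneg T), hVT⟩

end Iteration

/-- Proposition 3: if the primal problem is feasible and the step sizes satisfy
α < 2/L and β < min{ε/(2N^{3/2}L), √(α(1 − Lα/2)ε²/(2NL))}, then the VC-LB iterates
(z(0) = 0, λ-block projected gradient step with step α, μ-block projected sign step with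
step β) reach fes(q(z(T))) ≤ V(z(T)) ≤ ε for some
T ≤ ⌈(D* − D(z(0)))/δ(α,β)⌉. -/
theorem stmt_9 (N : ℕ) (hN : 0 < N) (A : Matrix (Fin N) (Fin N) ℝ) (hA : A.PosDef)
    (d vmin vmax qmin qmax : Fin N → ℝ)
    (hv : ∀ i, vmin i ≤ vmax i) (hq : ∀ i, qmin i ≤ qmax i)
    (hfeas : ∃ q : Fin N → ℝ, (∀ i, qmin i ≤ q i ∧ q i ≤ qmax i) ∧
      ∀ i, vmin i ≤ volt A d q i ∧ volt A d q i ≤ vmax i)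
    (L : ℝ)
    (hL : IsGreatest
      (Set.range fun i : Fin N => 2 * (hA.1.eigenvalues i + (hA.1.eigenvalues i)⁻¹)) L)
    (ε : ℝ) (hε : 0 < ε)
    (α β : ℝ) (hα0 : 0 < α) (hα : α < 2 / L) (hβ0 : 0 < β)
    (hβ : β < min (ε / (2 * (N : ℝ) ^ ((3 : ℝ) / 2) * L))
      (Real.sqrt (α * (1 - L * α / 2) * ε ^ 2 / (2 * (N : ℝ) * L))))
    (ziter : ℕ → Fin 4 → Fin N → ℝ) (hz0 : ziter 0 = 0)
    (hstep : ∀ t b i, ziter (t + 1) b i =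
      max (ziter t b i + (if (b : ℕ) < 2 then α * gradD A d vmin vmax qmin qmax (ziter t) b i
        else β * sgn (gradD A d vmin vmax qmin qmax (ziter t) b i))) 0) :
    ∃ T : ℕ,
      T ≤ ⌈(sSup (dualFun A d vmin vmax qmin qmax '' {z | ∀ b i, 0 ≤ z b i})
              - dualFun A d vmin vmax qmin qmax (ziter 0))
            / min ((α - (L / 2) * α ^ 2) * (ε ^ 2 / 2) - (N : ℝ) * L * β ^ 2)
                (ε * β * L * (N : ℝ) / (2 * (N : ℝ) ^ ((3 : ℝ) / 2) * L)
                  - β ^ 2 * L * (N : ℝ))⌉₊ ∧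
      fes A d vmin vmax qmin qmax (qOf A (ziter T))
          ≤ Vfun A d vmin vmax qmin qmax (ziter T) ∧
      Vfun A d vmin vmax qmin qmax (ziter T) ≤ ε := by
  exact stmt_9_general N hN A hA d vmin vmax qmin qmax hfeas L (fun i => hL.2 ⟨i, rfl⟩) ε hε α β
    hα0 hα hβ0 hβ ziter (fun b i => (congrFun (congrFun hz0 b) i).ge) hstep

end
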